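/- (Theorem 2) A disjunctive state D is game valid if and only if D is winning: for every named model M there is some game state g_k in D such that I have a winning strategy in G(M, g_k), if and only if there exists a regulation function ρ such that I have a winning strategy for the disjunctive game DG(D, ρ). -/

import Mathlib

/-- Hybrid logic formulas over nominals `ℕ` and propositional variables `ℕ`
(the two sorts are kept disjoint by the constructors). -/
inductive Form : Type where
  | prop : ℕ → Form
  | nom : ℕ → Form
  | rel : ℕ → ℕ → Form
  | and : Form → Form → Form
  | or : Form → Form → Form
  | imp : Form → Form → Form
  | neg : Form → Form
  | at_ : ℕ → Form → Form
  | box : Form → Form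
  | dia : Form → Form

/-- A model for hybrid logic: a nonempty set of worlds, an accessibility
relation, a valuation and an assignment of nominals to worlds. -/
structure Model where
  W : Type
  ne : Nonempty W
  R : W → W → Prop
  V : ℕ → W → Prop
  g : ℕ → W

/-- Satisfaction of a formula at a world of a model. -/
def sat (M : Model) : M.W → Form → Prop
  | w, .prop p => M.V p w
  | w, .nom i => M.g i = w
  | _, .rel i j => M.R (M.g i) (M.g j)
  | w, .and φ ψ => sat M w φ ∧ sat M w ψ
  | w, .or φ ψ => sat M w φ ∨ sat M w ψ
  | w, .imp φ ψ => ¬ sat M w φ ∨ sat M w ψ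
  | w, .neg φ => ¬ sat M w φ
  | _, .at_ i φ => sat M (M.g i) φ
  | w, .box φ => ∀ v, M.R w v → sat M v φ
  | w, .dia φ => ∃ v, M.R w v ∧ sat M v φ

/-- A model is named iff every world has a name, i.e. the assignment is surjective. -/
def Model.Named (M : Model) : Prop := Function.Surjective M.g

/-- A formula is valid iff it is true at every world of every model. -/
def Valid (φ : Form) : Prop := ∀ (M : Model) (w : M.W), sat M w φ

/-- Roles: `pro` means I am the proponent (`P`), `opp` that I am the opponent (`O`). -/
inductive Role : Type where
  | pro : Role
  | opp : Role

/-- Role switch. -/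
def Role.swap : Role → Role
  | .pro => .opp
  | .opp => .pro

/-- Game states of the semantic game over a named model, with worlds referred to
by their names: `loc r i φ` is `Q, i : φ` and `glob r φ` is `Q : φ`. -/
inductive NState : Type where
  | loc : Role → ℕ → Form → NState
  | glob : Role → Form → NState

/-- Elementary formulas: `p`, `i`, `R(i,j)`. -/
def Form.elem : Form → Prop
  | .prop _ => True
  | .nom _ => True
  | .rel _ _ => True
  | _ => False

/-- Elementary game states: states `Q, i : φ` with `φ` elementary (these are the
leaves of the semantic game over named models). -/
def NState.elem : NState → Prop
  | .loc _ _ φ => φ.elem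
  | .glob _ _ => False

/-- States labelled "I" (where it is My choice); all other non-leaf states are labelled "Y". -/
def NState.myTurn : NState → Prop
  | .loc .pro _ (.or _ _) => True
  | .loc .pro _ (.imp _ _) => True
  | .loc .pro _ (.neg _) => True
  | .loc .pro _ (.at_ _ _) => True
  | .loc .pro _ (.dia _) => True
  | .loc .opp _ (.and _ _) => True
  | .loc .opp _ (.box _) => True
  | .glob .opp _ => True
  | _ => False

/-- The (model-independent) child relation of the semantic game over named models,
using the reformulated rules `(R_□)`, `(R_◇)` and `(R_U)`:
`NChild s t` says that `t` is a child of `s` in the game tree. -/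
inductive NChild : NState → NState → Prop where
  | orL (r i φ ψ) : NChild (.loc r i (.or φ ψ)) (.loc r i φ)
  | orR (r i φ ψ) : NChild (.loc r i (.or φ ψ)) (.loc r i ψ)
  | andL (r i φ ψ) : NChild (.loc r i (.and φ ψ)) (.loc r i φ)
  | andR (r i φ ψ) : NChild (.loc r i (.and φ ψ)) (.loc r i ψ)
  | impL (r i φ ψ) : NChild (.loc r i (.imp φ ψ)) (.loc r.swap i φ)
  | impR (r i φ ψ) : NChild (.loc r i (.imp φ ψ)) (.loc r i ψ)
  | neg (r i φ) : NChild (.loc r i (.neg φ)) (.loc r.swap i φ)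
  | at_ (r i j φ) : NChild (.loc r i (.at_ j φ)) (.loc r j φ)
  | box (r i φ) (j : ℕ) : NChild (.loc r i (.box φ)) (.loc r j (.or (.neg (.rel i j)) φ))
  | dia (r i φ) (j : ℕ) : NChild (.loc r i (.dia φ)) (.loc r j (.and (.rel i j) φ))
  | glob (r φ) (i : ℕ) : NChild (.glob r φ) (.loc r i φ)

/-- The label of an elementary leaf state in the game over the model `M`:
"I" iff the corresponding elementary claim is correct. -/
def elemIWin (M : Model) : NState → Prop
  | .loc .pro i φ => sat M (M.g i) φ
  | .loc .opp i φ => ¬ sat M (M.g i) φ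
  | .glob _ _ => False

/-- I have a winning strategy for the semantic game `G(M, s)` over a named model:
at "I"-nodes I keep one child, at "Y"-nodes all children, and all leaves are labelled "I". -/
inductive IWinsN (M : Model) : NState → Prop where
  | leaf {s} : s.elem → elemIWin M s → IWinsN M s
  | move {s t} : s.myTurn → NChild s t → IWinsN M t → IWinsN M s
  | resp {s} : ¬ s.myTurn → ¬ s.elem → (∀ t, NChild s t → IWinsN M t) → IWinsN M s

/-- You have a winning strategy for the semantic game `G(M, s)` over a named model:
at "Y"-nodes You keep one child, at "I"-nodes all children, and all leaves are labelled "Y". -/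
inductive YWinsN (M : Model) : NState → Prop where
  | leaf {s} : s.elem → ¬ elemIWin M s → YWinsN M s
  | move {s t} : ¬ s.myTurn → NChild s t → YWinsN M t → YWinsN M s
  | resp {s} : s.myTurn → (∀ t, NChild s t → YWinsN M t) → YWinsN M s

/-- A disjunctive state: a finite multiset of game states. -/
abbrev DState : Type := Multiset NState

/-- A disjunctive state is elementary iff all its game states are. -/
def DElem (D : DState) : Prop := ∀ s ∈ D, s.elem

/-- A regulation function maps every non-elementary disjunctive state to one of
its non-elementary game states. -/
def IsRegulation (ρ : DState → NState) : Prop :=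
  ∀ D : DState, ¬ DElem D → ρ D ∈ D ∧ ¬ (ρ D).elem

/-- `D` is game valid: for every named model `M` there is a member of `D` for
which I have a winning strategy in the semantic game over `M`. -/
def GameValid (D : DState) : Prop :=
  ∀ M : Model, M.Named → ∃ s ∈ D, IWinsN M s

/-- I have a winning strategy for the disjunctive game `DG(D, ρ)`.
At the state `g ⋁ D` with `ρ (g ⋁ D) = g`: if `g` is labelled "I", I either move in `g`
or duplicate `g`; if `g` is labelled "Y", You move in `g` and I must win after every move.
An elementary disjunctive state is a leaf labelled "I" (winning for Me) iff for every named
model some member of it is a leaf labelled "I" of the semantic game over that model.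
Since winning strategies are wellfounded trees, infinite plays are not winning for Me. -/
inductive DWins (ρ : DState → NState) : DState → Prop where
  | leaf {D : DState} : DElem D → (∀ M : Model, M.Named → ∃ s ∈ D, IWinsN M s) →
      DWins ρ D
  | movI {D : DState} {g g' : NState} : ρ (g ::ₘ D) = g → g.myTurn → NChild g g' →
      DWins ρ (g' ::ₘ D) → DWins ρ (g ::ₘ D)
  | dup {D : DState} {g : NState} : ρ (g ::ₘ D) = g → g.myTurn →
      DWins ρ (g ::ₘ g ::ₘ D) → DWins ρ (g ::ₘ D)
  | movY {D : DState} {g : NState} : ρ (g ::ₘ D) = g → ¬ g.myTurn → ¬ g.elem →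
      (∀ g', NChild g g' → DWins ρ (g' ::ₘ D)) → DWins ρ (g ::ₘ D)

/-- `D` is winning: there is a regulation `ρ` such that I have a winning strategy
for `DG(D, ρ)`. -/
def Winning (D : DState) : Prop :=
  ∃ ρ : DState → NState, IsRegulation ρ ∧ DWins ρ D

/-- `Form.occurs k φ`: the nominal `k` occurs in the formula `φ`. -/
def Form.occurs (k : ℕ) : Form → Prop
  | .prop _ => False
  | .nom i => i = k
  | .rel i j => i = k ∨ j = k
  | .and φ ψ => φ.occurs k ∨ ψ.occurs k
  | .or φ ψ => φ.occurs k ∨ ψ.occurs k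
  | .imp φ ψ => φ.occurs k ∨ ψ.occurs k
  | .neg φ => φ.occurs k
  | .at_ i φ => i = k ∨ φ.occurs k
  | .box φ => φ.occurs k
  | .dia φ => φ.occurs k

/-- A nominal occurs in a game state iff it occurs as its label or in its formula. -/
def NState.occurs (k : ℕ) : NState → Prop
  | .loc _ i φ => i = k ∨ φ.occurs k
  | .glob _ φ => φ.occurs k

/-- A nominal occurs in a disjunctive state iff it occurs in one of its game states. -/
def DOccurs (k : ℕ) (D : DState) : Prop := ∃ s ∈ D, s.occurs k

namespace HGame

def encF : Form → ℕ
  | .prop p => Nat.pair 0 p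
  | .nom i => Nat.pair 1 i
  | .rel i j => Nat.pair 2 (Nat.pair i j)
  | .and φ ψ => Nat.pair 3 (Nat.pair (encF φ) (encF ψ))
  | .or φ ψ => Nat.pair 4 (Nat.pair (encF φ) (encF ψ))
  | .imp φ ψ => Nat.pair 5 (Nat.pair (encF φ) (encF ψ))
  | .neg φ => Nat.pair 6 (encF φ)
  | .at_ i φ => Nat.pair 7 (Nat.pair i (encF φ))
  | .box φ => Nat.pair 8 (encF φ)
  | .dia φ => Nat.pair 9 (encF φ)

theorem encF_inj : ∀ φ ψ : Form, encF φ = encF ψ → φ = ψ := by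
  intro φ
  induction φ with
  | prop | nom | rel =>
    intro ψ h
    cases ψ <;> simp_all [encF, Nat.pair_eq_pair]
  | and a b iha ihb | or a b iha ihb | imp a b iha ihb =>
    intro ψ h
    cases ψ <;> simp only [encF, Nat.pair_eq_pair] at h <;>
      first
        | exact absurd h.1 (by decide)
        | rw [iha _ h.2.1, ihb _ h.2.2]
  | at_ i a iha =>
    intro ψ h
    cases ψ <;> simp only [encF, Nat.pair_eq_pair] at h <;>
      first
        | exact absurd h.1 (by decide)
        | rw [h.2.1, iha _ h.2.2]
  | neg a iha | box a iha | dia a iha =>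
    intro ψ h
    cases ψ <;> simp only [encF, Nat.pair_eq_pair] at h <;>
      first
        | exact absurd h.1 (by decide)
        | rw [iha _ h.2]

def encR : Role → ℕ
  | .pro => 0
  | .opp => 1

def enc : NState → ℕ
  | .loc r i φ => Nat.pair 0 (Nat.pair (encR r) (Nat.pair i (encF φ)))
  | .glob r φ => Nat.pair 1 (Nat.pair (encR r) (encF φ))

theorem encR_inj : ∀ r s : Role, encR r = encR s → r = s := by
  intro r s h
  cases r <;> cases s <;> simp_all [encR]

theorem enc_inj : Function.Injective enc := by
  intro s t h
  cases s <;> cases t <;> simp only [enc, Nat.pair_eq_pair] at h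
  · obtain ⟨_, h1, h2, h3⟩ := h
    rw [encR_inj _ _ h1, h2, encF_inj _ _ h3]
  · exact absurd h.1 (by decide)
  · exact absurd h.1 (by decide)
  · obtain ⟨_, h1, h3⟩ := h
    rw [encR_inj _ _ h1, encF_inj _ _ h3]

instance : Countable NState := enc_inj.countable

def wtF : Form → ℕ
  | .prop _ => 0
  | .nom _ => 0
  | .rel _ _ => 0
  | .and φ ψ => wtF φ + wtF ψ + 1
  | .or φ ψ => wtF φ + wtF ψ + 1
  | .imp φ ψ => wtF φ + wtF ψ + 1
  | .neg φ => wtF φ + 1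
  | .at_ _ φ => wtF φ + 1
  | .box φ => wtF φ + 3
  | .dia φ => wtF φ + 3

def wt : NState → ℕ
  | .loc _ _ φ => wtF φ
  | .glob _ φ => wtF φ + 1

theorem wt_lt {s t : NState} (h : NChild s t) : wt t < wt s := by
  cases h <;> simp only [wt, wtF] <;> omega

theorem not_elem_of_myTurn {s : NState} (h : s.myTurn) : ¬ s.elem := by
  rcases s with ⟨r, i, φ⟩ | ⟨r, φ⟩
  · cases r <;> cases φ <;> simp_all [NState.myTurn, NState.elem, Form.elem]
  · simp [NState.elem]

theorem exists_child {s : NState} (h : ¬ s.elem) : ∃ t, NChild s t := by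
  rcases s with ⟨r, i, φ⟩ | ⟨r, φ⟩
  · cases φ
    case prop => exact absurd trivial h
    case nom => exact absurd trivial h
    case rel => exact absurd trivial h
    case and => exact ⟨_, .andL ..⟩
    case or => exact ⟨_, .orL ..⟩
    case imp => exact ⟨_, .impL ..⟩
    case neg => exact ⟨_, .neg ..⟩
    case at_ => exact ⟨_, .at_ ..⟩
    case box => exact ⟨_, .box _ _ _ 0⟩
    case dia => exact ⟨_, .dia _ _ _ 0⟩
  · exact ⟨_, .glob _ _ 0⟩

/-- soundness -/
theorem sound {ρ : DState → NState} {D : DState} (h : DWins ρ D) : GameValid D := by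
  induction h with
  | leaf _ h => exact h
  | movI _ ht hc _ ih =>
    intro M hM
    obtain ⟨s, hs, hw⟩ := ih M hM
    rcases Multiset.mem_cons.1 hs with rfl | hs
    · exact ⟨_, Multiset.mem_cons_self _ _, .move ht hc hw⟩
    · exact ⟨s, Multiset.mem_cons_of_mem hs, hw⟩
  | dup _ ht _ ih =>
    intro M hM
    obtain ⟨s, hs, hw⟩ := ih M hM
    rcases Multiset.mem_cons.1 hs with rfl | hs
    · exact ⟨_, Multiset.mem_cons_self _ _, hw⟩
    · exact ⟨s, hs, hw⟩
  | @movY D g _ ht he _ ih =>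
    intro M hM
    by_cases hD : ∃ s ∈ D, IWinsN M s
    · obtain ⟨s, hs, hw⟩ := hD
      exact ⟨s, Multiset.mem_cons_of_mem hs, hw⟩
    · refine ⟨g, Multiset.mem_cons_self _ _, .resp ht he fun t hc => ?_⟩
      obtain ⟨s, hs, hw⟩ := ih t hc M hM
      rcases Multiset.mem_cons.1 hs with rfl | hs
      · exact hw
      · exact absurd ⟨s, hs, hw⟩ hD

def total (D : DState) : ℕ := (D.map wt).sum

theorem total_cons (s : NState) (D : DState) : total (s ::ₘ D) = wt s + total D := by
  simp [total]

theorem win_of_elem {ρ : DState → NState} (hρ : IsRegulation ρ) :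
    ∀ (n : ℕ) (D : DState), total D = n →
      (∀ M : Model, M.Named → ∃ s ∈ D, s.elem ∧ IWinsN M s) → DWins ρ D := by
  intro n
  induction n using Nat.strong_induction_on with
  | _ n ih =>
    intro D hn hD
    by_cases he : DElem D
    · refine .leaf he fun M hM => ?_
      obtain ⟨s, hs, _, hw⟩ := hD M hM
      exact ⟨s, hs, hw⟩
    · obtain ⟨hm, hne⟩ := hρ D he
      obtain ⟨E, hE⟩ := Multiset.exists_cons_of_mem hm
      have key : ∀ t, NChild (ρ D) t → DWins ρ (t ::ₘ E) := by
        intro t ht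
        refine ih (total (t ::ₘ E)) ?_ _ rfl ?_
        · rw [← hn, hE, total_cons, total_cons]
          have := wt_lt ht
          omega
        · intro M hM
          obtain ⟨s, hs, hse, hw⟩ := hD M hM
          rw [hE] at hs
          rcases Multiset.mem_cons.1 hs with h | hs
          · exact absurd (h ▸ hse) hne
          · exact ⟨s, Multiset.mem_cons_of_mem hs, hse, hw⟩
      have hr : ρ (ρ D ::ₘ E) = ρ D := by rw [← hE]
      by_cases ht : (ρ D).myTurn
      · obtain ⟨t, hc⟩ := exists_child hne
        rw [hE]
        exact .movI hr ht hc (key t hc)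
      · rw [hE]
        exact .movY hr ht hne key

def yst (s : NState) : Prop := ¬ s.myTurn ∧ ¬ s.elem

theorem exists_reg : ∃ ρ : DState → NState, IsRegulation ρ ∧
    (∀ D, (∃ s ∈ D, yst s) → yst (ρ D)) ∧
    (∀ D h, (¬ ∃ s ∈ D, yst s) → h ∈ D → ¬ h.elem → enc h = (Nat.unpair D.card).1 → ρ D = h) := by
  have : ∀ D : DState, ∃ g : NState, (¬ DElem D → g ∈ D ∧ ¬ g.elem) ∧
      ((∃ s ∈ D, yst s) → yst g) ∧
      (∀ h, (¬ ∃ s ∈ D, yst s) → h ∈ D → ¬ h.elem → enc h = (Nat.unpair D.card).1 → g = h) := by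
    intro D
    by_cases h1 : ∃ s ∈ D, yst s
    · obtain ⟨s, hs, hy⟩ := h1
      exact ⟨s, fun _ => ⟨hs, hy.2⟩, fun _ => hy, fun h hn => absurd ⟨s, hs, hy⟩ hn⟩
    by_cases h2 : ∃ s ∈ D, ¬ s.elem ∧ enc s = (Nat.unpair D.card).1
    · obtain ⟨s, hs, he, hy⟩ := h2
      exact ⟨s, fun _ => ⟨hs, he⟩, fun h => absurd h h1, fun h _ _ _ hh =>
        enc_inj (hy.trans hh.symm)⟩
    by_cases h3 : DElem D
    · exact ⟨.glob .pro (.prop 0), fun h => absurd h3 h, fun h => absurd h h1,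
        fun h _ hm he => absurd (h3 h hm) he⟩
    · have h4 := h3
      unfold DElem at h4
      push Not at h4
      obtain ⟨s, hs, he⟩ := h4
      exact ⟨s, fun _ => ⟨hs, he⟩, fun h => absurd h h1,
        fun h _ hm he hh => absurd ⟨h, hm, he, hh⟩ h2⟩
  choose ρ h1 h2 h3 using this
  exact ⟨ρ, h1, h2, h3⟩

structure Good (ρ : DState → NState) (D : DState) (H : Set NState) : Prop where
  bad : ¬ DWins ρ D
  sub : ∀ s ∈ D, s ∈ H
  inv : ∀ h ∈ H, h ∈ D ∨ (yst h ∧ ∃ t ∈ H, NChild h t)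

theorem phase1 {ρ : DState → NState} (hρ : IsRegulation ρ)
    (hY : ∀ D, (∃ s ∈ D, yst s) → yst (ρ D)) :
    ∀ (n : ℕ) (D : DState) (H : Set NState), total D = n → Good ρ D H →
      ∃ D' H', Good ρ D' H' ∧ H ⊆ H' ∧ ¬ ∃ s ∈ D', yst s := by
  intro n
  induction n using Nat.strong_induction_on with
  | _ n ih =>
    intro D H hn hG
    by_cases hy : ∃ s ∈ D, yst s
    · have hyρ := hY D hy
      have hne : ¬ DElem D := by
        obtain ⟨s, hs, hys⟩ := hy
        exact fun h => hys.2 (h s hs)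
      obtain ⟨E, hE⟩ := Multiset.exists_cons_of_mem (hρ D hne).1
      have hr : ρ (ρ D ::ₘ E) = ρ D := by rw [← hE]
      have : ∃ t, NChild (ρ D) t ∧ ¬ DWins ρ (t ::ₘ E) := by
        by_contra hcon
        push Not at hcon
        apply hG.bad
        rw [hE]
        exact .movY hr hyρ.1 hyρ.2 hcon
      obtain ⟨t, hc, hb⟩ := this
      obtain ⟨D', H', hG', hs, hy'⟩ := ih (total (t ::ₘ E)) (by
        rw [← hn, hE, total_cons, total_cons]
        have := wt_lt hc
        omega) (t ::ₘ E) (insert t H) rfl ⟨hb, by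
          intro s hs
          rcases Multiset.mem_cons.1 hs with rfl | hs
          · exact Set.mem_insert _ _
          · exact Set.mem_insert_of_mem _ (hG.sub s (by rw [hE]; exact Multiset.mem_cons_of_mem hs)),
        by
          intro h hh
          rcases hh with rfl | hh
          · exact Or.inl (Multiset.mem_cons_self _ _)
          · rcases hG.inv h hh with h1 | ⟨h1, u, hu, hcu⟩
            · rw [hE] at h1
              rcases Multiset.mem_cons.1 h1 with h1 | h1
              · subst h1
                exact Or.inr ⟨hyρ, t, Set.mem_insert _ _, hc⟩
              · exact Or.inl (Multiset.mem_cons_of_mem h1)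
            · exact Or.inr ⟨h1, u, Set.mem_insert_of_mem _ hu, hcu⟩⟩
      exact ⟨D', H', hG', (Set.subset_insert _ _).trans hs, hy'⟩
    · exact ⟨D, H, hG, subset_rfl, hy⟩

theorem dup_step {ρ : DState → NState} (hρ : IsRegulation ρ) {D : DState} {H : Set NState}
    (hG : Good ρ D H) (hy : ¬ ∃ s ∈ D, yst s) (hne : ¬ DElem D) :
    Good ρ (ρ D ::ₘ D) H ∧ ¬ ∃ s ∈ (ρ D ::ₘ D), yst s := by
  obtain ⟨hm, he⟩ := hρ D hne
  have ht : (ρ D).myTurn := by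
    by_contra ht
    exact hy ⟨_, hm, ht, he⟩
  obtain ⟨E, hE⟩ := Multiset.exists_cons_of_mem hm
  have hr : ρ (ρ D ::ₘ E) = ρ D := by rw [← hE]
  refine ⟨⟨?_, ?_, ?_⟩, ?_⟩
  · intro hw
    apply hG.bad
    rw [hE]
    refine .dup hr ht ?_
    rwa [← hE]
  · intro s hs
    rcases Multiset.mem_cons.1 hs with rfl | hs
    · exact hG.sub _ hm
    · exact hG.sub _ hs
  · intro h hh
    rcases hG.inv h hh with h1 | h1
    · exact Or.inl (Multiset.mem_cons_of_mem h1)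
    · exact Or.inr h1
  · rintro ⟨s, hs, hys⟩
    rcases Multiset.mem_cons.1 hs with rfl | hs
    · exact hy ⟨_, hm, hys⟩
    · exact hy ⟨_, hs, hys⟩

theorem phase2 {ρ : DState → NState} (hρ : IsRegulation ρ) {D : DState} {H : Set NState}
    (hG : Good ρ D H) (hy : ¬ ∃ s ∈ D, yst s) (hne : ¬ DElem D) (k : ℕ) :
    ∃ D', Good ρ D' H ∧ (¬ ∃ s ∈ D', yst s) ∧ ¬ DElem D' ∧ D ≤ D' ∧ D'.card = D.card + k := by
  induction k with
  | zero => exact ⟨D, hG, hy, hne, le_rfl, rfl⟩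
  | succ k ih =>
    obtain ⟨D', hG', hy', hne', hle, hc⟩ := ih
    obtain ⟨h1, h2⟩ := dup_step hρ hG' hy' hne'
    refine ⟨_, h1, h2, ?_, hle.trans (Multiset.le_cons_self _ _), ?_⟩
    · exact fun h => hne' fun s hs => h s (Multiset.mem_cons_of_mem hs)
    · rw [Multiset.card_cons, hc]; rfl

theorem steer {ρ : DState → NState} (hρ : IsRegulation ρ)
    (hT : ∀ D h, (¬ ∃ s ∈ D, yst s) → h ∈ D → ¬ h.elem →
      enc h = (Nat.unpair D.card).1 → ρ D = h)
    {D : DState} {H : Set NState}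
    (hG : Good ρ D H) (hy : ¬ ∃ s ∈ D, yst s) {h : NState} (hm : h ∈ D) (he : ¬ h.elem) :
    ∃ D', Good ρ D' H ∧ (¬ ∃ s ∈ D', yst s) ∧ D ≤ D' ∧ ρ D' = h := by
  have hne : ¬ DElem D := fun hd => he (hd h hm)
  obtain ⟨D', hG', hy', hne', hle, hc⟩ :=
    phase2 hρ hG hy hne (Nat.pair (enc h) D.card - D.card)
  refine ⟨D', hG', hy', hle, hT D' h hy' (Multiset.mem_of_le hle hm) he ?_⟩
  have : D.card ≤ Nat.pair (enc h) D.card := Nat.right_le_pair _ _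
  rw [hc, Nat.add_sub_cancel' this, Nat.unpair_pair]

theorem task {ρ : DState → NState} (hρ : IsRegulation ρ)
    (hY : ∀ D, (∃ s ∈ D, yst s) → yst (ρ D))
    (hT : ∀ D h, (¬ ∃ s ∈ D, yst s) → h ∈ D → ¬ h.elem →
      enc h = (Nat.unpair D.card).1 → ρ D = h)
    {D : DState} {H : Set NState} (hG : Good ρ D H) {h t : NState} (hh : h ∈ H) :
    ∃ D' H', Good ρ D' H' ∧ H ⊆ H' ∧ (yst h → ∃ u ∈ H', NChild h u) ∧
      (h.myTurn → NChild h t → t ∈ H') := by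
  obtain ⟨D1, H1, hG1, hs1, hy1⟩ := phase1 hρ hY _ D H rfl hG
  by_cases hI : h.myTurn ∧ NChild h t
  · obtain ⟨hI, hc⟩ := hI
    have he := not_elem_of_myTurn hI
    have hm1 : h ∈ D1 := (hG1.inv h (hs1 hh)).resolve_right fun h1 => h1.1.1 hI
    obtain ⟨D2, hG2, hy2, hle2, hr2⟩ := steer hρ hT hG1 hy1 hm1 he
    have hm2 := Multiset.mem_of_le hle2 hm1
    obtain ⟨hG3, hy3⟩ := dup_step hρ hG2 hy2 fun hd => he (hd h hm2)
    rw [hr2] at hG3 hy3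
    obtain ⟨D4, hG4, hy4, hle4, hr4⟩ := steer hρ hT hG3 hy3 (Multiset.mem_cons_self _ _) he
    obtain ⟨E, hE⟩ := Multiset.exists_cons_of_mem
      (Multiset.mem_of_le hle4 (Multiset.mem_cons_self _ _))
    have hmE : h ∈ E := by
      rw [hE, Multiset.cons_le_cons_iff] at hle4
      exact Multiset.mem_of_le hle4 hm2
    subst hE
    refine ⟨t ::ₘ E, insert t H1, ⟨fun hw => hG4.bad (.movI hr4 hI hc hw), ?_, ?_⟩,
      hs1.trans (Set.subset_insert _ _), fun h1 => absurd hI h1.1, fun _ _ => Set.mem_insert _ _⟩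
    · intro s hs
      rcases Multiset.mem_cons.1 hs with rfl | hs
      · exact Set.mem_insert _ _
      · exact Set.mem_insert_of_mem _ (hG4.sub s (Multiset.mem_cons_of_mem hs))
    · intro s hs
      rcases hs with rfl | hs
      · exact Or.inl (Multiset.mem_cons_self _ _)
      · rcases hG4.inv s hs with h1 | ⟨h1, u, hu, hcu⟩
        · rcases Multiset.mem_cons.1 h1 with rfl | h1
          · exact Or.inl (Multiset.mem_cons_of_mem hmE)
          · exact Or.inl (Multiset.mem_cons_of_mem h1)
        · exact Or.inr ⟨h1, u, Set.mem_insert_of_mem _ hu, hcu⟩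
  · refine ⟨D1, H1, hG1, hs1, fun hy => ?_, fun h1 h2 => absurd ⟨h1, h2⟩ hI⟩
    rcases hG1.inv h (hs1 hh) with h1 | h1
    · exact absurd ⟨h, h1, hy⟩ hy1
    · exact h1.2

theorem IWins_elem {M : Model} {s : NState} (he : s.elem) (h : IWinsN M s) : elemIWin M s := by
  cases h with
  | leaf _ h => exact h
  | move ht => exact absurd he (not_elem_of_myTurn ht)
  | resp _ hn => exact absurd he hn

theorem ultra {ι : Type} (U : Ultrafilter ι) (M : ι → Model) :
    ∃ N : Model, N.Named ∧ ∀ s : NState, s.elem →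
      (elemIWin N s ↔ ∀ᶠ p in (U : Filter ι), elemIWin (M p) s) := by
  let st : Setoid ℕ := {
    r := fun i j => ∀ᶠ p in (U : Filter ι), (M p).g i = (M p).g j
    iseqv := ⟨fun i => Filter.Eventually.of_forall fun _ => rfl,
      fun h => h.mono fun _ h => h.symm,
      fun h1 h2 => (h1.and h2).mono fun _ h => h.1.trans h.2⟩ }
  let N : Model := {
    W := Quotient st
    ne := ⟨Quotient.mk st 0⟩
    R := fun w v => ∃ i j, Quotient.mk st i = w ∧ Quotient.mk st j = v ∧
      ∀ᶠ p in (U : Filter ι), (M p).R ((M p).g i) ((M p).g j)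
    V := fun q w => ∃ i, Quotient.mk st i = w ∧ ∀ᶠ p in (U : Filter ι), (M p).V q ((M p).g i)
    g := Quotient.mk st }
  have hmk : ∀ i j, Quotient.mk st i = Quotient.mk st j ↔
      ∀ᶠ p in (U : Filter ι), (M p).g i = (M p).g j := fun i j => Quotient.eq (r := st)
  have key : ∀ (i : ℕ) (φ : Form), φ.elem →
      (sat N (N.g i) φ ↔ ∀ᶠ p in (U : Filter ι), sat (M p) ((M p).g i) φ) := by
    intro i φ hφ
    cases φ with
    | prop q =>
      simp only [sat]
      constructor
      · rintro ⟨k, hk, hp⟩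
        filter_upwards [(hmk _ _).1 hk, hp] with p h1 h2
        rwa [← h1]
      · exact fun h => ⟨i, rfl, h⟩
    | nom j => exact hmk j i
    | rel a b =>
      simp only [sat]
      constructor
      · rintro ⟨k, l, hk, hl, hp⟩
        filter_upwards [(hmk _ _).1 hk, (hmk _ _).1 hl, hp] with p h1 h2 h3
        rwa [← h1, ← h2]
      · exact fun h => ⟨a, b, rfl, rfl, h⟩
    | _ => exact absurd hφ id
  refine ⟨N, fun w => Quotient.exists_rep w, ?_⟩
  intro s hs
  rcases s with ⟨r, i, φ⟩ | ⟨r, φ⟩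
  · cases r with
    | pro => exact key i φ hs
    | opp =>
      simp only [elemIWin]
      rw [key i φ hs, Ultrafilter.eventually_not]
  · exact absurd hs id

structure Pt (ρ : DState → NState) : Type where
  D : DState
  H : Set NState
  good : Good ρ D H

instance (ρ : DState → NState) : Preorder (Pt ρ) := Preorder.lift Pt.H

theorem complete {D : DState} (hv : GameValid D) : Winning D := by
  obtain ⟨ρ, hρ, hY, hT⟩ := exists_reg
  refine ⟨ρ, hρ, ?_⟩
  by_contra hbad
  let p0 : Pt ρ := ⟨D, {s | s ∈ D}, hbad, fun _ h => h, fun _ h => Or.inl h⟩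
  let P : NState × NState → Pt ρ → Prop := fun x p =>
    (yst x.1 → ∃ u ∈ p.H, NChild x.1 u) ∧ (x.1.myTurn → NChild x.1 x.2 → x.2 ∈ p.H)
  let C : NState × NState → Order.Cofinal (Pt ρ) := fun x => {
    carrier := {p | P x p ∨ ∀ q, p ≤ q → x.1 ∉ q.H}
    isCofinal := by
      intro p
      by_cases h : ∀ q, p ≤ q → x.1 ∉ q.H
      · exact ⟨p, Or.inr h, le_rfl⟩
      · push Not at h
        obtain ⟨q, hpq, hq⟩ := h
        obtain ⟨D', H', hG, hs, h1, h2⟩ := task hρ hY hT q.good (t := x.2) hq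
        exact ⟨⟨D', H', hG⟩, Or.inl ⟨h1, h2⟩, hpq.trans hs⟩ }
  letI : Encodable (NState × NState) := Encodable.ofCountable _
  let I := Order.idealOfCofinals p0 C
  have hp0 : p0 ∈ I := Order.mem_idealOfCofinals p0 C
  have hC : ∀ x, ∀ q ∈ I, x.1 ∈ q.H → ∃ p ∈ I, P x p := by
    intro x q hq hx
    obtain ⟨p, hpC, hpI⟩ := Order.cofinal_meets_idealOfCofinals p0 C x
    obtain ⟨r, hr, h1, h2⟩ := I.directed p hpI q hq
    rcases hpC with h | h
    · exact ⟨p, hpI, h⟩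
    · exact absurd (h2 hx) (h r h1)
  have hM : ∀ p : Pt ρ, ∃ M : Model, ∀ s ∈ p.H, s.elem → ¬ elemIWin M s := by
    intro p
    by_contra hcon
    push Not at hcon
    refine p.good.bad (win_of_elem hρ _ _ rfl fun M _ => ?_)
    obtain ⟨s, hs, he, hw⟩ := hcon M
    exact ⟨s, (p.good.inv s hs).resolve_right fun h => h.1.2 he, he, .leaf he hw⟩
  choose M hM using hM
  haveI : Nonempty I := ⟨⟨p0, hp0⟩⟩
  haveI : IsDirectedOrder I := ⟨fun a b => by
    obtain ⟨r, hr, h1, h2⟩ := I.directed a a.2 b b.2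
    exact ⟨⟨r, hr⟩, h1, h2⟩⟩
  obtain ⟨N, hN, hNs⟩ := ultra (Ultrafilter.of (Filter.atTop : Filter I)) (fun p => M p.1)
  have main : ∀ s, IWinsN N s → ¬ ∃ q ∈ I, s ∈ q.H := by
    intro s hw
    induction hw with
    | @leaf s he hw =>
      rintro ⟨q, hq, hs⟩
      have h1 := (hNs s he).1 hw
      have h2 : ∀ᶠ p in (Ultrafilter.of (Filter.atTop : Filter I) : Filter I),
          ¬ elemIWin (M p.1) s := by
        refine (Ultrafilter.of_le (Filter.atTop : Filter I)) ?_
        refine (Filter.eventually_ge_atTop (⟨q, hq⟩ : I)).mono fun p hp => ?_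
        exact hM p.1 s (hp hs) he
      obtain ⟨p, h3, h4⟩ := (h1.and h2).exists
      exact h4 h3
    | @move s t ht hc _ ih =>
      rintro ⟨q, hq, hs⟩
      obtain ⟨p, hp, hP⟩ := hC (s, t) q hq hs
      exact ih ⟨p, hp, hP.2 ht hc⟩
    | @resp s ht he _ ih =>
      rintro ⟨q, hq, hs⟩
      obtain ⟨p, hp, hP⟩ := hC (s, s) q hq hs
      obtain ⟨u, hu, hc⟩ := hP.1 ⟨ht, he⟩
      exact ih u hc ⟨p, hp, hu⟩
  obtain ⟨s, hs, hw⟩ := hv N hN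
  exact main s hw ⟨p0, hp0, hs⟩

end HGame

/-- (Theorem 2) A disjunctive state is game valid iff it is winning. -/
theorem gameValid_iff_winning (D : DState) : GameValid D ↔ Winning D := by
  exact ⟨HGame.complete, fun ⟨_, _, h⟩ => HGame.sound h⟩
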